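/- arXiv:2110.01026 — 4 statements merged into one kernel-verified Lean document; each statement's English description precedes it below -/
import Mathlib

section
/- Let R be a commutative ring, n ≥ 1, M an n×n matrix over R with rows and columns indexed by {1,...,n}, and let k be an integer with 1 ≤ k ≤ n. Then det(M) · det(M[{k+1,...,n},{k+1,...,n}])^{k-1} = Σ_{σ ∈ S_k} sign(σ) · Π_{i=1}^{k} det(M[{i,k+1,...,n},{σ(i),k+1,...,n}]), where by convention the determinant of the empty (0×0) matrix is 1. -/
/-!
Right multiplication of `M = [[A, B], [C, D]]` by `[[det D, 0], [-adj(D) C, 1]]` clears the lower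
left block and puts `S = det(D) A - B adj(D) C` in the upper left one. Taking determinants, with `A`
of size `m`, gives `det M * det(D)^m = det S * det D` over any commutative ring. One factor `det D`
can be cancelled: replace `D` by `X + D`, whose determinant is monic in `X`, and then set `X = 0`.
For `m = 1` the resulting identity says that the entries of `S` are the minors of `M` obtained by
bordering `D` with one row and one column, so for general `m` it is Sylvester's identity, and the
theorem is its Leibniz expansion.
-/

section

open Matrix Polynomial

variable {l m n o p q R S : Type*}

theorem submatrix_sumElim_sumElim (M : Matrix n o R) (r : l → n) (s : p → n) (r' : m → o)
    (s' : q → o) :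
    M.submatrix (Sum.elim r s) (Sum.elim r' s') =
      fromBlocks (M.submatrix r r') (M.submatrix r s') (M.submatrix s r') (M.submatrix s s') := by
  ext (_ | _) (_ | _) <;> rfl

variable [CommRing R] [CommRing S] [Fintype p] [DecidableEq p]

/-- The Schur complement `A - B * D⁻¹ * C` multiplied by `D.det`, with the adjugate standing for
`D.det • D⁻¹`, so that it makes sense when `D` is not invertible. -/
def scaledSchurComplement (A : Matrix l m R) (B : Matrix l p R) (C : Matrix p m R)
    (D : Matrix p p R) : Matrix l m R :=
  D.det • A - B * D.adjugate * C

theorem scaledSchurComplement_map (f : R →+* S) (A : Matrix l m R) (B : Matrix l p R)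
    (C : Matrix p m R) (D : Matrix p p R) :
    (scaledSchurComplement A B C D).map f =
      scaledSchurComplement (A.map f) (B.map f) (C.map f) (D.map f) := by
  have hdet : f D.det = (D.map f).det := f.map_det D
  have hadj : D.adjugate.map f = (D.map f).adjugate := f.map_adjugate D
  simp only [scaledSchurComplement, Matrix.map_sub f (map_sub f), Matrix.map_mul, hadj, ← hdet,
    Matrix.map_smulₛₗ f f _ fun _ => map_mul f _ _]

section FromBlocks

variable [Fintype m] [DecidableEq m]

theorem det_fromBlocks_mul_det_pow_card (A : Matrix m m R) (B : Matrix m p R)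
    (C : Matrix p m R) (D : Matrix p p R) :
    (fromBlocks A B C D).det * D.det ^ Fintype.card m =
      (scaledSchurComplement A B C D).det * D.det := by
  have helim : fromBlocks A B C D * fromBlocks (D.det • 1) 0 (-(D.adjugate * C)) 1 =
      fromBlocks (scaledSchurComplement A B C D) B 0 D := by
    simp [fromBlocks_multiply, scaledSchurComplement, ← Matrix.mul_assoc, mul_adjugate,
      sub_eq_add_neg]
  simpa using congrArg det helim

variable [Nonempty m]

theorem det_fromBlocks_mul_det_pow_of_isRightRegular (A : Matrix m m R) (B : Matrix m p R)
    (C : Matrix p m R) {D : Matrix p p R} (hD : IsRightRegular D.det) :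
    (fromBlocks A B C D).det * D.det ^ (Fintype.card m - 1) =
      (scaledSchurComplement A B C D).det := by
  apply hD
  simp only [mul_assoc, pow_sub_one_mul Fintype.card_ne_zero, det_fromBlocks_mul_det_pow_card]

theorem det_fromBlocks_mul_det_pow (A : Matrix m m R) (B : Matrix m p R) (C : Matrix p m R)
    (D : Matrix p p R) :
    (fromBlocks A B C D).det * D.det ^ (Fintype.card m - 1) =
      (scaledSchurComplement A B C D).det := by
  -- `charmatrix (-D)` is `X + D`.
  have hdeform := congrArg (evalRingHom 0) <|
    det_fromBlocks_mul_det_pow_of_isRightRegular (A.map Polynomial.C) (B.map Polynomial.C)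
      (C.map Polynomial.C) (charpoly_monic (-D)).isRegular.right
  have heval_C : ⇑(evalRingHom (0 : R)) ∘ Polynomial.C = id := by
    ext; simp
  have heval_D : (charmatrix (-D)).map (evalRingHom 0) = D := by
    ext i j
    by_cases hij : i = j <;> simp [hij]
  simpa only [map_mul, map_pow, RingHom.map_det, RingHom.mapMatrix_apply, fromBlocks_map,
    scaledSchurComplement_map, Matrix.map_map, heval_C, Matrix.map_id, heval_D] using hdeform

end FromBlocks

/-- The matrix of the minors of `M` obtained by bordering the submatrix on rows `s` and columns `s'`
with one row `r i` and one column `r' j`. The bordering row and column come first, at the `Unit`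
index. -/
def borderedMinors (M : Matrix n o R) (r : l → n) (s : p → n) (r' : m → o) (s' : p → o) :
    Matrix l m R :=
  of fun i j =>
    (M.submatrix (Sum.elim (fun _ : Unit => r i) s) (Sum.elim (fun _ : Unit => r' j) s')).det

theorem borderedMinors_eq_scaledSchurComplement (M : Matrix n o R) (r : l → n) (s : p → n)
    (r' : m → o) (s' : p → o) :
    borderedMinors M r s r' s' =
      scaledSchurComplement (M.submatrix r r') (M.submatrix r s') (M.submatrix s r')
        (M.submatrix s s') := by
  ext i j
  have hunit := det_fromBlocks_mul_det_pow
    (M.submatrix (fun _ : Unit => r i) (fun _ : Unit => r' j))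
    (M.submatrix (fun _ => r i) s') (M.submatrix s (fun _ => r' j)) (M.submatrix s s')
  rw [Fintype.card_unit, Nat.sub_self, pow_zero, mul_one, ← submatrix_sumElim_sumElim,
    det_unique (scaledSchurComplement _ _ _ _)] at hunit
  exact hunit

variable [Fintype m] [DecidableEq m] [Nonempty m] [Fintype n] [DecidableEq n]

theorem det_borderedMinors (M : Matrix n n R) {r : m → n} {s : p → n}
    (hrs : Function.Bijective (Sum.elim r s)) :
    (borderedMinors M r s r s).det = M.det * (M.submatrix s s).det ^ (Fintype.card m - 1) := by
  have hM : (M.submatrix (Sum.elim r s) (Sum.elim r s)).det = M.det :=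
    det_submatrix_equiv_self (Equiv.ofBijective _ hrs) M
  rw [borderedMinors_eq_scaledSchurComplement, ← det_fromBlocks_mul_det_pow,
    ← submatrix_sumElim_sumElim, hM]

theorem dodgson_muir_general (M : Matrix n n R) {r : m → n} {s : p → n}
    (hrs : Function.Bijective (Sum.elim r s)) :
    M.det * (M.submatrix s s).det ^ (Fintype.card m - 1) =
      ∑ σ : Equiv.Perm m, (Equiv.Perm.sign σ : ℤ) • ∏ i : m,
        (M.submatrix (Sum.elim (fun _ : Unit => r i) s)
          (Sum.elim (fun _ : Unit => r (σ i)) s)).det := by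
  rw [← det_borderedMinors M hrs, ← det_transpose, det_apply]
  rfl

end

theorem bijective_sumElim_castLE_addNat {k n : ℕ} (h : k ≤ n) :
    Function.Bijective
      (Sum.elim (Fin.castLE h) fun j : Fin (n - k) =>
        Fin.cast (Nat.sub_add_cancel h) (j.addNat k)) := by
  convert (finSumFinEquiv.trans (finCongr (Nat.add_sub_of_le h))).bijective using 1
  ext (_ | _) <;> simp [Nat.add_comm]

/-- The index `t` of `{1, ..., n}` is the element of `Fin n` with value `t - 1`. In a matrix indexed
by `Unit ⊕ Fin (n - k)`, the `Unit` index stands for row `i` or column `σ i`; as `i, σ i ≤ k`, it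
precedes the others and rows and columns are in increasing order. -/
theorem dodgson_muir {R : Type*} [CommRing R] (n k : ℕ) (hn : 1 ≤ n)
    (hk : 1 ≤ k) (hkn : k ≤ n) (M : Matrix (Fin n) (Fin n) R) :
    M.det *
      (M.submatrix
        (fun j : Fin (n - k) => (⟨(j : ℕ) + k, by have := j.isLt; omega⟩ : Fin n))
        (fun j : Fin (n - k) => (⟨(j : ℕ) + k, by have := j.isLt; omega⟩ : Fin n))).det
        ^ (k - 1) =
    ∑ σ : Equiv.Perm (Fin k),
      (Equiv.Perm.sign σ : ℤ) •
        ∏ i : Fin k,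
          (M.submatrix
            (Sum.elim (fun _ : Unit => (⟨(i : ℕ), by have := i.isLt; omega⟩ : Fin n))
              (fun j : Fin (n - k) => (⟨(j : ℕ) + k, by have := j.isLt; omega⟩ : Fin n)))
            (Sum.elim (fun _ : Unit => (⟨(σ i : ℕ), by have := (σ i).isLt; omega⟩ : Fin n))
              (fun j : Fin (n - k) => (⟨(j : ℕ) + k, by have := j.isLt; omega⟩ : Fin n)))).det
    := by
  have : Nonempty (Fin k) := ⟨⟨0, hk⟩⟩
  have hgeneral := dodgson_muir_general M (bijective_sumElim_castLE_addNat hkn)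
  rwa [Fintype.card_fin] at hgeneral
end

section
/- Generalized Forest Identity: Fix n ≥ 1, a commutative ring R, edge weights a : V × V → R on V = {0,1,...,n}, and an integer k with 1 ≤ k ≤ n. Then the sum, over all k-tuples (F_1,...,F_k) in which F_1 is a rooted forest on V with root set {0} (a spanning tree rooted at 0) and each of F_2,...,F_k is a rooted forest on V with root set {0,1,...,k}, of the product Π_{i=1}^{k} (weight of F_i), equals the sum, over all k-tuples (F_1,...,F_k) in which F_i is a rooted forest on V with root set {0,...,k}∖{i} for each i and the tuple has no forbidden meta-cycle, of the product Π_{i=1}^{k} (weight of F_i). -/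
open scoped Classical

/-!
STATEMENT 2: The Generalized Forest Identity.

The node set `V = {0, 1, ..., n}` is `Fin (n+1)` (paper node `v` is the `Fin (n+1)`
element of value `v`).  A rooted forest with root set `U` is encoded by its out-edge
function `f : V → V` (with roots as fixed points).  The `k`-tuples of forests are
encoded as functions `F : Fin k → (V → V)`, where the tuple index `i : Fin k`
corresponds to the paper's index `i + 1 ∈ {1, ..., k}`.
-/

/-- A rooted forest on `{0, ..., n}` with root set `U`: `f` fixes exactly the
elements of `U`, and every node reaches `U` under iteration of `f`. -/
def IsRootedForest (n : ℕ) (U : Finset (Fin (n + 1))) (f : Fin (n + 1) → Fin (n + 1)) : Prop :=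
  (∀ r ∈ U, f r = r) ∧ (∀ v, v ∉ U → f v ≠ v) ∧ ∀ v, ∃ m : ℕ, f^[m] v ∈ U

/-- The weight of a rooted forest with root set `U`: the product of the weights of
its edges `v → f v`, `v ∉ U`. -/
def forestWeight {R : Type*} [CommRing R] (n : ℕ) (a : Fin (n + 1) → Fin (n + 1) → R)
    (U : Finset (Fin (n + 1))) (f : Fin (n + 1) → Fin (n + 1)) : R :=
  ∏ v ∈ Uᶜ, a v (f v)

/-- The root set `{0, ..., k} \ {i}` as a finset of `Fin (n+1)` (here `i` is the
paper-level node index). -/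
def rootSetOf (n k i : ℕ) : Finset (Fin (n + 1)) :=
  Finset.univ.filter fun v => (v : ℕ) ≤ k ∧ (v : ℕ) ≠ i

/-- The root set `{0, ..., k}` as a finset of `Fin (n+1)`. -/
def fullRootSet (n k : ℕ) : Finset (Fin (n + 1)) :=
  Finset.univ.filter fun v => (v : ℕ) ≤ k

/-- A `k`-tuple `F` of forests (the `i`-th forest having root set `{0,...,k} \ {i+1}`,
for `i : Fin k`) has a forbidden meta-cycle: there are `m ≥ 2` and distinct indices
`i₁, ..., iₘ ∈ {1, ..., k}` such that, cyclically, node `i_j` is rooted at `i_{j+1}` in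
the `i_j`-th forest (being rooted at `r` means some iterate of the out-edge function
starting from the node reaches `r`). -/
def HasForbiddenMetaCycle (n k : ℕ) (hkn : k ≤ n) (F : Fin k → Fin (n + 1) → Fin (n + 1)) :
    Prop :=
  ∃ (m : ℕ) (_ : 2 ≤ m) (c : Fin m → Fin k), Function.Injective c ∧
    ∀ j : Fin m, ∃ t : ℕ,
      (F (c j))^[t] ⟨(c j : ℕ) + 1, by have := (c j).isLt; omega⟩ =
        (⟨(c ⟨((j : ℕ) + 1) % m, Nat.mod_lt _ (by omega)⟩ : ℕ) + 1,
          by have := (c ⟨((j : ℕ) + 1) % m, Nat.mod_lt _ (by omega)⟩).isLt; omega⟩ : Fin (n + 1))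

/-!
Let `L U` be the graph Laplacian with the rows in `U` replaced by unit rows, `e` the indexing of the
`k` extra roots, `U₀ = {0}` and `U = {0, ..., k}`. Expanding rows, `det (L U)` is the sum of the
weights of the forests with root set `U`, and the entry `(v, j)` of `adj (L U)` is the same sum
restricted to the forests in which `v` is rooted at `j`. As `L U₀` and `L U` have the same rows
outside the range of `e`, Jacobi's identity evaluates the principal minor of `L U₀ * adj (L U)` on
the extra roots as `det (L U₀) * det (L U) ^ (k - 1)`, one side of the theorem. On the other hand
row `i` of this minor is the weighted sum, over the forests `F` with root set `U \ {e i}`, of the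
unit row at `i` minus the unit row at the extra root above `e i` in `F` (if there is one).
Expanding these rows leaves, for each tuple of forests, the determinant of `1` minus the adjacency
matrix of a partial function, which is `1` if that function has no cycle and `0` otherwise.
-/

namespace RootedForest

open Finset Matrix Polynomial

section Determinants

variable {R m β : Type*} [CommRing R] [Fintype m] [DecidableEq m]

lemma det_of_sum_smul (s : m → Finset β) (c : m → β → R) (r : m → β → m → R) :
    (of fun u => ∑ w ∈ s u, c u w • r u w).det =
      ∑ f ∈ Fintype.piFinset s, (∏ u, c u (f u)) * (of fun u => r u (f u)).det := by
  refine (detRowAlternating.toMultilinearMap.map_sum_finset _ s).trans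
    (sum_congr rfl fun f _ => ?_)
  exact detRowAlternating.toMultilinearMap.map_smul_univ _ _

lemma mul_adjugate_apply_eq_det_updateRow (A B : Matrix m m R) (i j : m) :
    (A * B.adjugate) i j = (B.updateRow j (A i)).det := by
  rw [← cramer_transpose_apply, cramer_eq_adjugate_mulVec, ← adjugate_transpose, mulVec_transpose]
  rfl

lemma det_updateRow_updateRow_swap (A : Matrix m m R) {i j : m} (hij : i ≠ j) (x y : m → R) :
    ((A.updateRow i x).updateRow j y).det = -((A.updateRow i y).updateRow j x).det := by
  rw [← neg_neg ((A.updateRow i x).updateRow j y).det]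
  refine congrArg Neg.neg (((detRowAlternating (R := R)).map_swap _ hij).symm.trans ?_)
  refine congrArg Matrix.det (Matrix.ext fun u l => ?_)
  change ((A.updateRow i x).updateRow j y) (Equiv.swap i j u) l = _
  rcases eq_or_ne u i with rfl | hi
  · simp [hij]
  rcases eq_or_ne u j with rfl | hj
  · simp [hij]
  · simp [hi, hj, Equiv.swap_apply_of_ne_of_ne hi hj]

lemma mul_adjugate_updateRow_single_apply (A : Matrix m m R) (i j : m) :
    (A * (A.updateRow i (Pi.single i 1)).adjugate) i j =
      if i = j then A.det else -A.adjugate i j := by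
  rw [mul_adjugate_apply_eq_det_updateRow]
  split_ifs with hij
  · subst hij
    rw [updateRow_idem, updateRow_eq_self]
  · rw [det_updateRow_updateRow_swap A hij, updateRow_eq_self, adjugate_apply]

lemma det_eq_pow_mul_det_submatrix {N : Matrix m m R} {s : Finset m} {d : R}
    (hN : ∀ v ∉ s, N v = Pi.single v d) :
    N.det = d ^ (Fintype.card m - #s) * (N.submatrix (↑) (↑) : Matrix s s R).det := by
  have hfactor : N = diagonal (s.piecewise 1 fun _ => d) *
      of (s.piecewise N.row (1 : Matrix m m R).row) := by
    ext v l
    by_cases hv : v ∈ s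
    · simp [diagonal_mul, hv]
    · simp [diagonal_mul, hv, hN v hv, one_apply, Pi.single_apply, eq_comm]
  rw [← det_piecewise_one_eq_submatrix_det]
  conv_lhs => rw [hfactor]
  rw [det_mul, det_diagonal, prod_piecewise]
  simp [← compl_eq_univ_sdiff, card_compl]

variable {M Q : Matrix m m R} {s : Finset m}

lemma det_submatrix_mul_adjugate_of_isLeftRegular (hs : s.Nonempty) (hMQ : ∀ v ∉ s, M v = Q v)
    (hQ : IsLeftRegular Q.det) :
    ((M * Q.adjugate).submatrix (↑) (↑) : Matrix s s R).det = M.det * Q.det ^ (#s - 1) := by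
  have hrow (v) (hv : v ∉ s) : (M * Q.adjugate) v = Pi.single v Q.det := by
    have : (M * Q.adjugate) v = (Q * Q.adjugate) v := by
      ext l
      rw [mul_apply, mul_apply, hMQ v hv]
    rw [this, mul_adjugate]
    ext l
    simp [one_apply, Pi.single_apply, eq_comm]
  have hcard : Fintype.card m - 1 = Fintype.card m - #s + (#s - 1) := by
    have := hs.card_pos
    have := s.card_le_univ
    omega
  refine hQ.pow (Fintype.card m - #s) ?_
  calc Q.det ^ (Fintype.card m - #s) * ((M * Q.adjugate).submatrix (↑) (↑) : Matrix s s R).det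
      = M.det * Q.det ^ (Fintype.card m - 1) := by
        rw [← det_eq_pow_mul_det_submatrix hrow, det_mul, det_adjugate]
    _ = Q.det ^ (Fintype.card m - #s) * (M.det * Q.det ^ (#s - 1)) := by
        rw [hcard, pow_add]
        ring

/- Over `R[X]` the determinant of `Q + X` is monic, hence regular, and `M + X` still agrees with
`Q + X` outside `s`; the claim is recovered at `X = 0`. -/
lemma det_submatrix_mul_adjugate (hs : s.Nonempty) (hMQ : ∀ v ∉ s, M v = Q v) :
    ((M * Q.adjugate).submatrix (↑) (↑) : Matrix s s R).det = M.det * Q.det ^ (#s - 1) := by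
  let shift (A : Matrix m m R) : Matrix m m R[X] := (X : R[X]) • 1 + A.map C
  let ev : R[X] →+* R := evalRingHom 0
  have ev_shift (A : Matrix m m R) : ev.mapMatrix (shift A) = A := by
    ext
    simp [ev, shift]
  have ev_det (A : Matrix m m R) : ev (shift A).det = A.det := by
    rw [RingHom.map_det, ev_shift]
  have hreg : IsLeftRegular (shift Q).det := by
    refine (Monic.isRegular ?_).left
    rw [Monic.def, leadingCoeff_det_X_one_add_C]
  have hrow (v) (hv : v ∉ s) : shift M v = shift Q v := by
    ext1 l
    simp [shift, hMQ v hv]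
  have key := congrArg ev (det_submatrix_mul_adjugate_of_isLeftRegular hs hrow hreg)
  rw [map_mul, map_pow, ev_det, ev_det, RingHom.map_det] at key
  rw [← key]
  conv_lhs => rw [← ev_shift M, ← ev_shift Q, ← RingHom.map_adjugate, ← map_mul]
  rfl

end Determinants

section Cycles

variable {α : Type*}

/-- A cycle of length at least two in the digraph with edges `i → j` for `P i j`. Positions along
the cycle are taken modulo its length, in the format of `HasForbiddenMetaCycle`. -/
def HasCycle (P : α → α → Prop) : Prop :=
  ∃ (m : ℕ) (_ : 2 ≤ m) (c : Fin m → α), Function.Injective c ∧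
    ∀ j : Fin m, P (c j) (c ⟨((j : ℕ) + 1) % m, Nat.mod_lt _ (by omega)⟩)

lemma exists_mem_periodicPts [Finite α] [Nonempty α] (q : α → α) :
    ∃ x, x ∈ Function.periodicPts q := by
  obtain ⟨x⟩ := ‹Nonempty α›
  obtain ⟨s, t, hst, h⟩ := Finite.exists_ne_map_eq_of_infinite (fun t : ℕ => q^[t] x)
  wlog hlt : s < t generalizing s t
  · exact this t s hst.symm h.symm (by omega)
  refine ⟨q^[s] x, Function.mem_periodicPts.2 ⟨t - s, by omega, ?_⟩⟩
  change q^[t - s] (q^[s] x) = q^[s] x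
  rw [← Function.iterate_add_apply, Nat.sub_add_cancel hlt.le]
  exact h.symm

lemma hasCycle_of_forall_rel [Finite α] [Nonempty α] {P : α → α → Prop} {q : α → α}
    (hne : ∀ x, q x ≠ x) (hq : ∀ x, P x (q x)) : HasCycle P := by
  obtain ⟨x, hx⟩ := exists_mem_periodicPts q
  have hpos := Function.minimalPeriod_pos_of_mem_periodicPts hx
  have hne_one : Function.minimalPeriod q x ≠ 1 := fun h =>
    hne x (Function.minimalPeriod_eq_one_iff_isFixedPt.1 h)
  refine ⟨Function.minimalPeriod q x, by omega, fun j => q^[(j : ℕ)] x, fun i j hij => ?_,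
    fun j => ?_⟩
  · exact Fin.ext (Function.iterate_injOn_Iio_minimalPeriod i.2 j.2 hij)
  · simp only [Function.iterate_mod_minimalPeriod_eq, Function.iterate_succ_apply']
    exact hq _

lemma HasCycle.map {β : Type*} {P : α → α → Prop} {P' : β → β → Prop} (h : HasCycle P) {g : α → β}
    (hg : Function.Injective g) (hP : ∀ x y, P x y → P' (g x) (g y)) : HasCycle P' := by
  obtain ⟨m, hm, c, hc, hcycle⟩ := h
  exact ⟨m, hm, g ∘ c, hg.comp hc, fun j => hP _ _ (hcycle j)⟩

lemma cyclic_succ_ne {m : ℕ} (hm : 2 ≤ m) (j : Fin m) :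
    j ≠ ⟨((j : ℕ) + 1) % m, Nat.mod_lt _ (by omega)⟩ := by
  intro h
  have hj : (j : ℕ) = (j + 1) % m := congrArg Fin.val h
  rcases Nat.lt_or_ge ((j : ℕ) + 1) m with hlt | hge
  · rw [Nat.mod_eq_of_lt hlt] at hj
    omega
  · rw [show (j : ℕ) + 1 = m by omega, Nat.mod_self] at hj
    omega

lemma hasCycle_iff_not_wellFounded [Finite α] (P : α → α → Prop) :
    HasCycle P ↔ ¬ WellFounded fun j i => i ≠ j ∧ P i j := by
  constructor
  · rintro ⟨m, hm, c, hc, hcycle⟩ hwf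
    obtain ⟨-, ⟨j, rfl⟩, hmin⟩ := hwf.has_min (Set.range c) ⟨_, ⟨⟨0, by omega⟩, rfl⟩⟩
    exact hmin _ ⟨_, rfl⟩ ⟨hc.ne (cyclic_succ_ne hm j), hcycle j⟩
  · intro hwf
    set r : α → α → Prop := fun j i => i ≠ j ∧ P i j
    obtain ⟨x, hx⟩ : ∃ x, ¬ Acc r x := by
      by_contra! hacc
      exact hwf ⟨hacc⟩
    have hnext (u : {u // ¬ Acc r u}) : ∃ w : {u // ¬ Acc r u}, r w u := by
      obtain ⟨w, hw, hwu⟩ := exists_not_acc_lt_of_not_acc u.2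
      exact ⟨⟨w, hw⟩, hwu⟩
    choose q hq using hnext
    have : Nonempty {u // ¬ Acc r u} := ⟨⟨x, hx⟩⟩
    have hcycle : HasCycle fun u w : {u // ¬ Acc r u} => P u w :=
      hasCycle_of_forall_rel (q := q) (fun u hu => (hq u).1 (congrArg Subtype.val hu.symm))
        fun u => (hq u).2
    exact hcycle.map Subtype.val_injective fun _ _ h => h

end Cycles

section ParentMatrix

variable {R α : Type*} [CommRing R] [DecidableEq α] {r : α → α → Prop}

/-- The matrix `1 - A`, where `A` has an entry `1` in row `u` and column `w` if `r w u`. It is used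
for relations `r w u` saying that `w` is the parent of `u`, whose rows have at most one such
entry. -/
noncomputable def parentMatrix (R : Type*) [CommRing R] (r : α → α → Prop) : Matrix α α R :=
  of fun u w => (if u = w then 1 else 0) - if r w u then 1 else 0

lemma det_parentMatrix_of_wellFounded [Fintype α] (hr : WellFounded r) :
    (parentMatrix R r).det = 1 := by
  have : IsWellFounded α r := ⟨hr⟩
  have htri : (parentMatrix R r)ᵀ.BlockTriangular (IsWellFounded.rank r) := by
    intro u w hwu
    have hne : w ≠ u := by
      rintro rfl
      exact hwu.false
    have hrel : ¬ r u w := fun h => (IsWellFounded.rank_lt_of_rel h).asymm hwu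
    simp [parentMatrix, hne, hrel]
  rw [← det_transpose, htri.det]
  refine prod_eq_one fun b _ => ?_
  have hone : (parentMatrix R r)ᵀ.toSquareBlock (IsWellFounded.rank r) b = 1 := by
    ext ⟨u, hu⟩ ⟨w, hw⟩
    have hrel : ¬ r u w := fun h => (IsWellFounded.rank_lt_of_rel h).ne (hu.trans hw.symm)
    simp [parentMatrix, toSquareBlock_def, hrel, one_apply, eq_comm]
  rw [hone, det_one]

lemma parentMatrix_mulVec_of_rel [Fintype α] (hr : Relator.LeftUnique r) {w u : α} (hwu : r w u)
    (x : α → R) : (parentMatrix R r *ᵥ x) u = x u - x w := by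
  have hiff (l : α) : r l u ↔ l = w := ⟨fun h => hr h hwu, fun h => h ▸ hwu⟩
  simp [parentMatrix, mulVec, dotProduct, sub_mul, sum_sub_distrib, hiff]

lemma parentMatrix_mulVec_of_forall_not_rel [Fintype α] {u : α} (hu : ∀ w, ¬ r w u) (x : α → R) :
    (parentMatrix R r *ᵥ x) u = x u := by
  simp [parentMatrix, mulVec, dotProduct, hu]

lemma det_parentMatrix_of_not_wellFounded [Fintype α] (hr : Relator.LeftUnique r)
    (hwf : ¬ WellFounded r) : (parentMatrix R r).det = 0 := by
  obtain ⟨v, hv⟩ : ∃ v, ¬ Acc r v := by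
    by_contra! hacc
    exact hwf ⟨hacc⟩
  let x : α → R := fun u => if Acc r u then 0 else 1
  have hx : parentMatrix R r *ᵥ x = 0 := by
    ext u
    by_cases hu : ∃ w, r w u
    · obtain ⟨w, hwu⟩ := hu
      have hacc : Acc r u ↔ Acc r w := ⟨fun h => h.inv hwu, fun h => ⟨u, fun l hl => hr hl hwu ▸ h⟩⟩
      simp [parentMatrix_mulVec_of_rel hr hwu, x, hacc]
    · push Not at hu
      have hacc : Acc r u := ⟨u, fun l hl => absurd hl (hu l)⟩
      simp [parentMatrix_mulVec_of_forall_not_rel hu, x, hacc]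
  refine det_eq_zero_of_mulVec_eq_zero_of_mem_nonZeroDivisors hx (i := v) ?_
  simp [x, hv]

lemma det_parentMatrix [Fintype α] (hr : Relator.LeftUnique r) :
    (parentMatrix R r).det = if WellFounded r then 1 else 0 := by
  split_ifs with hwf
  · exact det_parentMatrix_of_wellFounded hwf
  · exact det_parentMatrix_of_not_wellFounded hr hwf

end ParentMatrix

section Forests

variable {V : Type*}

/-- `f` is the parent function of a rooted forest with root set `U`, on an arbitrary vertex type.
Vertices outside `U` are automatically not fixed, see `isRootedForest_iff_isForest`. -/
def IsForest (U : Finset V) (f : V → V) : Prop :=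
  (∀ r ∈ U, f r = r) ∧ ∀ v, ∃ m : ℕ, f^[m] v ∈ U

/-- `j` is an ancestor of `v` for the parent function `f`; if `j` is a root this says that `v` is
rooted at `j`. -/
def Reaches (f : V → V) (v j : V) : Prop := ∃ t : ℕ, f^[t] v = j

/-- `w` is the parent of `u` in the forest with root set `U` and parent function `f`; roots have no
parent although `f` fixes them. -/
def ParentRel (U : Finset V) (f : V → V) (w u : V) : Prop := u ∉ U ∧ f u = w

lemma isRootedForest_iff_isForest {n : ℕ} {U : Finset (Fin (n + 1))}
    {f : Fin (n + 1) → Fin (n + 1)} : IsRootedForest n U f ↔ IsForest U f := by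
  refine ⟨fun h => ⟨h.1, h.2.2⟩, fun ⟨hfix, hreach⟩ => ⟨hfix, fun v hv hfv => hv ?_, hreach⟩⟩
  obtain ⟨m, hm⟩ := hreach v
  rwa [Function.iterate_fixed hfv] at hm

variable {U : Finset V} {f : V → V} {u v i j : V}

lemma reaches_iff_eq_of_fixed (hu : f u = u) : Reaches f u j ↔ u = j := by
  simp [Reaches, Function.iterate_fixed hu]

lemma reaches_iff_reaches_apply (huj : u ≠ j) : Reaches f u j ↔ Reaches f (f u) j := by
  constructor
  · rintro ⟨t | t, ht⟩
    · exact absurd ht huj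
    · exact ⟨t, ht⟩
  · rintro ⟨t, ht⟩
    exact ⟨t + 1, ht⟩

lemma Reaches.eq_of_fixed (hvi : Reaches f v i) (hvj : Reaches f v j) (hi : f i = i)
    (hj : f j = j) : i = j := by
  obtain ⟨s, rfl⟩ := hvi
  obtain ⟨t, rfl⟩ := hvj
  rw [← Function.iterate_fixed hi t, ← Function.iterate_add_apply, add_comm,
    Function.iterate_add_apply, Function.iterate_fixed hj]

lemma leftUnique_parentRel (U : Finset V) (f : V → V) : Relator.LeftUnique (ParentRel U f) :=
  fun _ _ _ h h' => h.2.symm.trans h'.2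

lemma wellFounded_parentRel : WellFounded (ParentRel U f) ↔ ∀ v, ∃ m : ℕ, f^[m] v ∈ U := by
  constructor
  · intro hwf v
    induction v using hwf.induction with
    | _ v ih =>
      by_cases hv : v ∈ U
      · exact ⟨0, hv⟩
      · obtain ⟨m, hm⟩ := ih (f v) ⟨hv, rfl⟩
        exact ⟨m + 1, hm⟩
  · refine fun h => ⟨fun v => ?_⟩
    obtain ⟨m, hm⟩ := h v
    induction m generalizing v with
    | zero => exact ⟨_, fun _ hw => absurd hm hw.1⟩
    | succ m ih => exact ⟨_, fun _ hw => ih _ (hw.2 ▸ hm)⟩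

end Forests

section ReplaceRows

variable {R V : Type*} [DecidableEq V] {U : Finset V} {j : V}

/-- The matrix with the rows of `B` in `U` and the rows of `A` outside `U`. -/
def replaceRows (U : Finset V) (B A : Matrix V V R) : Matrix V V R :=
  of fun u l => if u ∈ U then B u l else A u l

lemma updateRow_replaceRows (hj : j ∈ U) (B A : Matrix V V R) (x : V → R) :
    (replaceRows U B A).updateRow j x = replaceRows U (B.updateRow j x) A := by
  ext u l
  rcases eq_or_ne u j with rfl | hu
  · simp [replaceRows, hj]
  · simp [replaceRows, hu]

lemma replaceRows_one_parentMatrix [CommRing R] (U : Finset V) (f : V → V) :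
    replaceRows U 1 (parentMatrix R (ParentRel U f)) = parentMatrix R (ParentRel U f) := by
  ext u l
  by_cases hu : u ∈ U <;> simp [replaceRows, parentMatrix, ParentRel, hu, one_apply]

end ReplaceRows

section MatrixTree

variable {R V : Type*} [CommRing R] [Fintype V] [DecidableEq V]

/-- The finite set of parent functions of rooted forests with root set `U`. -/
noncomputable def forests (U : Finset V) : Finset (V → V) := {f | IsForest U f}

/-- The product of the weights of the edges `v → f v`, `v ∉ U`: `forestWeight` on an arbitrary
vertex type. -/
def edgeWeight (a : V → V → R) (U : Finset V) (f : V → V) : R := ∏ v ∈ Uᶜ, a v (f v)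

/-- The weighted out-degree Laplacian of `a`. -/
def laplacian (a : V → V → R) : Matrix V V R := diagonal (fun u => ∑ w, a u w) - of a

/-- The Laplacian of `a` with the rows in `U` replaced by unit rows. These rows are kept instead of
being deleted so that the matrices for different root sets have the same index type. -/
def groundedLaplacian (a : V → V → R) (U : Finset V) : Matrix V V R :=
  replaceRows U 1 (laplacian a)

variable (a : V → V → R) {U U' : Finset V} {f : V → V} {u v i j : V}

lemma laplacian_row_eq_sum (u : V) :
    laplacian a u = ∑ w, a u w • (Pi.single u 1 - Pi.single w 1) := by
  ext l
  simp [laplacian, diagonal_apply, Finset.sum_apply, mul_sub, sum_sub_distrib, Pi.single_apply,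
    eq_comm]

lemma groundedLaplacian_row_of_mem (hu : u ∈ U) : groundedLaplacian a U u = Pi.single u 1 := by
  ext l
  simp [groundedLaplacian, replaceRows, hu, one_apply, Pi.single_apply, eq_comm]

lemma groundedLaplacian_row_of_notMem (hu : u ∉ U) : groundedLaplacian a U u = laplacian a u := by
  ext l
  simp [groundedLaplacian, replaceRows, hu]

lemma groundedLaplacian_row_congr (hu : u ∈ U ↔ u ∈ U') :
    groundedLaplacian a U u = groundedLaplacian a U' u := by
  by_cases h : u ∈ U
  · rw [groundedLaplacian_row_of_mem a h, groundedLaplacian_row_of_mem a (hu.1 h)]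
  · rw [groundedLaplacian_row_of_notMem a h, groundedLaplacian_row_of_notMem a (mt hu.2 h)]

lemma updateRow_groundedLaplacian_erase (hi : i ∈ U) :
    (groundedLaplacian a (U.erase i)).updateRow i (Pi.single i 1) = groundedLaplacian a U := by
  refine funext fun u => ?_
  rcases eq_or_ne u i with rfl | hu
  · rw [updateRow_self, groundedLaplacian_row_of_mem a hi]
  · rw [updateRow_ne hu]
    exact groundedLaplacian_row_congr a (by simp [hu])

lemma det_replaceRows_laplacian (U : Finset V) (B : Matrix V V R) :
    (replaceRows U B (laplacian a)).det = ∑ f : V → V with ∀ r ∈ U, f r = r,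
      edgeWeight a U f * (replaceRows U B (parentMatrix R (ParentRel U f))).det := by
  let s (u : V) : Finset V := if u ∈ U then {u} else univ
  let c (u w : V) : R := if u ∈ U then 1 else a u w
  let row (u w : V) : V → R := if u ∈ U then B u else Pi.single u 1 - Pi.single w 1
  have hrows : replaceRows U B (laplacian a) = of fun u => ∑ w ∈ s u, c u w • row u w := by
    ext u l
    by_cases hu : u ∈ U <;>
      simp [replaceRows, s, c, row, hu, laplacian_row_eq_sum, Finset.sum_apply]
  have hs : Fintype.piFinset s = ({f | ∀ r ∈ U, f r = r} : Finset (V → V)) := by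
    ext f
    simp only [Fintype.mem_piFinset, mem_filter, mem_univ, true_and]
    refine forall_congr' fun u => ?_
    by_cases hu : u ∈ U <;> simp [s, hu]
  have hc (f : V → V) : ∏ u, c u (f u) = edgeWeight a U f := by
    simp [edgeWeight, c, prod_ite, filter_not, compl_eq_univ_sdiff]
  have hrow (f : V → V) : (of fun u => row u (f u)) =
      replaceRows U B (parentMatrix R (ParentRel U f)) := by
    ext u l
    by_cases hu : u ∈ U <;>
      simp [replaceRows, row, hu, parentMatrix, ParentRel, Pi.single_apply, eq_comm]
  rw [hrows, det_of_sum_smul, hs]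
  simp only [hc, hrow]

lemma det_parentMatrix_parentRel (hf : ∀ r ∈ U, f r = r) :
    (parentMatrix R (ParentRel U f)).det = if IsForest U f then 1 else 0 := by
  simp only [det_parentMatrix (leftUnique_parentRel U f), wellFounded_parentRel, IsForest,
    and_iff_right hf]

lemma sum_fixing_ite_isForest (U : Finset V) (g : (V → V) → R) :
    ∑ f : V → V with ∀ r ∈ U, f r = r, (if IsForest U f then g f else 0) =
      ∑ f ∈ forests U, g f := by
  rw [← sum_filter, filter_filter, forests]
  exact sum_congr (filter_congr fun f _ => and_iff_right_of_imp And.left) fun _ _ => rfl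

theorem det_groundedLaplacian (U : Finset V) :
    (groundedLaplacian a U).det = ∑ f ∈ forests U, edgeWeight a U f := by
  rw [groundedLaplacian, det_replaceRows_laplacian, ← sum_fixing_ite_isForest]
  refine sum_congr rfl fun f hf => ?_
  rw [replaceRows_one_parentMatrix, det_parentMatrix_parentRel (mem_filter.1 hf).2, mul_ite,
    mul_one, mul_zero]

lemma parentMatrix_mulVec_reaches (hf : ∀ r ∈ U, f r = r) (hj : j ∈ U) :
    parentMatrix R (ParentRel U f) *ᵥ (fun v => if Reaches f v j then 1 else 0) =
      Pi.single j 1 := by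
  ext u
  by_cases hu : u ∈ U
  · rw [parentMatrix_mulVec_of_forall_not_rel fun w hw => hw.1 hu]
    simp [reaches_iff_eq_of_fixed (hf u hu), Pi.single_apply]
  · have huj : u ≠ j := by
      rintro rfl
      exact hu hj
    rw [parentMatrix_mulVec_of_rel (leftUnique_parentRel U f) ⟨hu, rfl⟩]
    simp [reaches_iff_reaches_apply huj, huj]

lemma adjugate_parentMatrix_parentRel (hf : ∀ r ∈ U, f r = r) (hj : j ∈ U) (v : V) :
    (parentMatrix R (ParentRel U f)).adjugate v j =
      if IsForest U f then if Reaches f v j then 1 else 0 else 0 := by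
  set A := parentMatrix R (ParentRel U f)
  have hcol : A.adjugate *ᵥ Pi.single j 1 = A.det • fun v => if Reaches f v j then 1 else 0 := by
    rw [← parentMatrix_mulVec_reaches hf hj, mulVec_mulVec, adjugate_mul, smul_mulVec, one_mulVec]
  rw [det_parentMatrix_parentRel hf, mulVec_single_one] at hcol
  refine (congrFun hcol v).trans ?_
  rw [Pi.smul_apply, smul_eq_mul, ite_mul, one_mul, zero_mul]

theorem adjugate_groundedLaplacian_apply (hj : j ∈ U) (v : V) :
    (groundedLaplacian a U).adjugate v j =
      ∑ f ∈ forests U, edgeWeight a U f * if Reaches f v j then 1 else 0 := by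
  rw [adjugate_apply, groundedLaplacian, updateRow_replaceRows hj, det_replaceRows_laplacian,
    ← sum_fixing_ite_isForest]
  refine sum_congr rfl fun f hf => ?_
  rw [← updateRow_replaceRows hj, replaceRows_one_parentMatrix, ← adjugate_apply,
    adjugate_parentMatrix_parentRel (mem_filter.1 hf).2 hj, mul_ite, mul_zero]

lemma groundedLaplacian_mul_adjugate_apply (hi' : i ∉ U') (hi : i ∈ U) (hj : j ∈ U) :
    (groundedLaplacian a U' * (groundedLaplacian a U).adjugate) i j =
      ∑ f ∈ forests (U.erase i), edgeWeight a (U.erase i) f *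
        ((if i = j then 1 else 0) - if i ≠ j ∧ Reaches f i j then 1 else 0) := by
  have hrow : groundedLaplacian a U' i = groundedLaplacian a (U.erase i) i :=
    groundedLaplacian_row_congr a (by simp [hi'])
  rw [mul_apply, hrow, ← mul_apply, ← updateRow_groundedLaplacian_erase a hi,
    mul_adjugate_updateRow_single_apply]
  split_ifs with hij
  · simp [hij, det_groundedLaplacian]
  · simp [hij, adjugate_groundedLaplacian_apply a (mem_erase.2 ⟨Ne.symm hij, hj⟩)]

end MatrixTree

section Tuples

lemma leftUnique_rootRel {V ι : Type*} [DecidableEq V] {e : ι ↪ V} {F : ι → V → V} {U : Finset V}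
    (he : ∀ i, e i ∈ U) (hF : ∀ i, IsForest (U.erase (e i)) (F i)) :
    Relator.LeftUnique fun j i => i ≠ j ∧ Reaches (F i) (e i) (e j) := by
  rintro j j' i ⟨hij, hj⟩ ⟨hij', hj'⟩
  have hfix (l) (hl : i ≠ l) : F i (e l) = e l :=
    (hF i).1 _ (mem_erase.2 ⟨e.injective.ne hl.symm, he l⟩)
  exact e.injective (hj.eq_of_fixed hj' (hfix j hij) (hfix j' hij'))

variable {R V ι : Type*} [CommRing R] [Fintype V] [DecidableEq V] [Fintype ι] [DecidableEq ι]
  (a : V → V → R) (U₀ : Finset V) (e : ι ↪ V)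

lemma det_mul_det_pow_eq_sum (i₀ : ι) (U : Finset V) :
    (groundedLaplacian a U₀).det * (groundedLaplacian a U).det ^ (Fintype.card ι - 1) =
      ∑ F : ι → V → V with IsForest U₀ (F i₀) ∧ ∀ i, i ≠ i₀ → IsForest U (F i),
        edgeWeight a U₀ (F i₀) * ∏ i with i ≠ i₀, edgeWeight a U (F i) := by
  let W (i : ι) : Finset V := if i = i₀ then U₀ else U
  have hprod (g : Finset V → ι → R) :
      ∏ i, g (W i) i = g U₀ i₀ * ∏ i with i ≠ i₀, g U i := by
    rw [filter_ne', ← mul_prod_erase _ _ (mem_univ i₀)]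
    congr 1
    · simp [W]
    · exact prod_congr rfl fun i hi => by simp [W, ne_of_mem_erase hi]
  have htuples : Fintype.piFinset (fun i => forests (W i)) =
      ({F | IsForest U₀ (F i₀) ∧ ∀ i, i ≠ i₀ → IsForest U (F i)} : Finset (ι → V → V)) := by
    ext F
    simp only [Fintype.mem_piFinset, forests, mem_filter, mem_univ, true_and]
    refine ⟨fun h => ⟨by simpa [W] using h i₀, fun i hi => by simpa [W, hi] using h i⟩,
      fun h i => ?_⟩
    rcases eq_or_ne i i₀ with rfl | hi
    · simpa [W] using h.1
    · simpa [W, hi] using h.2 i hi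
  calc (groundedLaplacian a U₀).det * (groundedLaplacian a U).det ^ (Fintype.card ι - 1)
      = ∏ i, ∑ f ∈ forests (W i), edgeWeight a (W i) f := by
        rw [hprod fun U _ => ∑ f ∈ forests U, edgeWeight a U f, prod_const, filter_ne',
          card_erase_of_mem (mem_univ i₀), card_univ, det_groundedLaplacian, det_groundedLaplacian]
    _ = ∑ F ∈ Fintype.piFinset fun i => forests (W i), ∏ i, edgeWeight a (W i) (F i) :=
        prod_univ_sum _ _
    _ = _ := by
        rw [htuples]
        exact sum_congr rfl fun F _ => hprod fun U i => edgeWeight a U (F i)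

variable {U₀ e} in
lemma det_submatrix_groundedLaplacian_mul_adjugate {U : Finset V} (he₀ : ∀ i, e i ∉ U₀)
    (he : ∀ i, e i ∈ U) :
    ((groundedLaplacian a U₀ * (groundedLaplacian a U).adjugate).submatrix e e).det =
      ∑ F : ι → V → V with (∀ i, IsForest (U.erase (e i)) (F i)) ∧
          ¬ HasCycle fun i j => Reaches (F i) (e i) (e j),
        ∏ i, edgeWeight a (U.erase (e i)) (F i) := by
  let row (i : ι) (f : V → V) (j : ι) : R :=
    (if i = j then 1 else 0) - if i ≠ j ∧ Reaches f (e i) (e j) then 1 else 0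
  have hrows : (groundedLaplacian a U₀ * (groundedLaplacian a U).adjugate).submatrix e e =
      of fun i => ∑ f ∈ forests (U.erase (e i)), edgeWeight a (U.erase (e i)) f • row i f := by
    ext i j
    simp [groundedLaplacian_mul_adjugate_apply a (he₀ i) (he i) (he j), row, Finset.sum_apply]
  have hdet (F : ι → V → V) (hF : ∀ i, IsForest (U.erase (e i)) (F i)) :
      (of fun i => row i (F i)).det =
        if ¬ HasCycle fun i j => Reaches (F i) (e i) (e j) then 1 else 0 := by
    simp only [hasCycle_iff_not_wellFounded, not_not]
    refine Eq.trans (congrArg Matrix.det ?_) (det_parentMatrix (leftUnique_rootRel he hF))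
    ext i j
    simp [row, parentMatrix]
  have htuples : Fintype.piFinset (fun i => forests (U.erase (e i))) =
      ({F | ∀ i, IsForest (U.erase (e i)) (F i)} : Finset (ι → V → V)) := by
    ext F
    simp [forests]
  rw [hrows, det_of_sum_smul, htuples, ← filter_filter]
  refine (sum_congr rfl fun F hF => ?_).trans (sum_filter _ _).symm
  rw [hdet F (mem_filter.1 hF).2, mul_ite, mul_one, mul_zero]

variable {U₀ e} in
lemma det_submatrix_groundedLaplacian_mul_adjugate_eq_mul_pow [Nonempty ι] :
    ((groundedLaplacian a U₀ *
        (groundedLaplacian a (U₀ ∪ univ.map e)).adjugate).submatrix e e).det =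
      (groundedLaplacian a U₀).det *
        (groundedLaplacian a (U₀ ∪ univ.map e)).det ^ (Fintype.card ι - 1) := by
  let E : ι ≃ univ.map e := Equiv.ofBijective (fun i => ⟨e i, by simp⟩)
    ⟨fun i j h => e.injective (congrArg Subtype.val h), fun ⟨v, hv⟩ => by simpa using hv⟩
  have key := det_submatrix_mul_adjugate (M := groundedLaplacian a U₀)
    (Q := groundedLaplacian a (U₀ ∪ univ.map e)) (s := univ.map e) (univ_nonempty.map)
    fun v hv => groundedLaplacian_row_congr a (by simp only [mem_union, hv, or_false])
  rw [card_map, card_univ, ← det_submatrix_equiv_self E, submatrix_submatrix] at key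
  exact key

end Tuples

section Nodes

variable {n k : ℕ} (hkn : k ≤ n)

/-- The node `i + 1` attached to the tuple index `i`, which is the paper's index `i + 1`. -/
def node : Fin k ↪ Fin (n + 1) where
  toFun i := ⟨(i : ℕ) + 1, by omega⟩
  inj' i j h := Fin.ext (Nat.succ_injective (congrArg Fin.val h))

lemma val_node (i : Fin k) : (node hkn i : ℕ) = i + 1 := rfl

lemma node_notMem_singleton_zero (i : Fin k) : node hkn i ∉ ({0} : Finset (Fin (n + 1))) := by
  rw [mem_singleton, Fin.ext_iff, val_node, Fin.val_zero]
  exact Nat.succ_ne_zero i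

lemma fullRootSet_eq_union_map_node : fullRootSet n k = {0} ∪ univ.map (node hkn) := by
  ext v
  simp only [fullRootSet, mem_filter, mem_univ, true_and, mem_union, mem_singleton, mem_map,
    Fin.ext_iff, val_node, Fin.val_zero]
  constructor
  · intro hv
    rcases Nat.eq_zero_or_pos v with h | h
    · exact Or.inl h
    · exact Or.inr ⟨⟨v - 1, by omega⟩, Nat.sub_add_cancel h⟩
  · rintro (h | ⟨i, h⟩) <;> omega

lemma rootSetOf_eq_erase_node (i : Fin k) :
    rootSetOf n k (i + 1) = (fullRootSet n k).erase (node hkn i) := by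
  ext v
  simp only [rootSetOf, fullRootSet, mem_filter, mem_univ, true_and, mem_erase, ne_eq,
    Fin.ext_iff, val_node, and_comm]

lemma forestWeight_eq_edgeWeight {R : Type*} [CommRing R] (a : Fin (n + 1) → Fin (n + 1) → R) :
    forestWeight n a = edgeWeight a := rfl

lemma hasForbiddenMetaCycle_iff_hasCycle (F : Fin k → Fin (n + 1) → Fin (n + 1)) :
    HasForbiddenMetaCycle n k hkn F ↔
      HasCycle fun i j => Reaches (F i) (node hkn i) (node hkn j) := Iff.rfl

end Nodes

end RootedForest

open RootedForest in
theorem generalized_forest_identity_general {R V ι : Type*} [CommRing R] [Fintype V]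
    [DecidableEq V] [Fintype ι] [DecidableEq ι] (a : V → V → R) (U₀ : Finset V) (e : ι ↪ V)
    (he : ∀ i, e i ∉ U₀) (i₀ : ι) :
    (∑ F : ι → V → V with IsForest U₀ (F i₀) ∧
          ∀ i, i ≠ i₀ → IsForest (U₀ ∪ Finset.univ.map e) (F i),
        edgeWeight a U₀ (F i₀) *
          ∏ i with i ≠ i₀, edgeWeight a (U₀ ∪ Finset.univ.map e) (F i)) =
      ∑ F : ι → V → V with (∀ i, IsForest ((U₀ ∪ Finset.univ.map e).erase (e i)) (F i)) ∧
          ¬ HasCycle fun i j => Reaches (F i) (e i) (e j),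
        ∏ i, edgeWeight a ((U₀ ∪ Finset.univ.map e).erase (e i)) (F i) := by
  have : Nonempty ι := ⟨i₀⟩
  rw [← det_mul_det_pow_eq_sum, ← det_submatrix_groundedLaplacian_mul_adjugate_eq_mul_pow,
    det_submatrix_groundedLaplacian_mul_adjugate a he (by simp)]

theorem generalized_forest_identity {R : Type*} [CommRing R] (n k : ℕ)
    (hn : 1 ≤ n) (hk : 1 ≤ k) (hkn : k ≤ n) (a : Fin (n + 1) → Fin (n + 1) → R) :
    (∑ F ∈ Finset.univ.filter (fun F : Fin k → Fin (n + 1) → Fin (n + 1) =>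
        IsRootedForest n {0} (F ⟨0, hk⟩) ∧
        ∀ i : Fin k, i ≠ ⟨0, hk⟩ → IsRootedForest n (fullRootSet n k) (F i)),
      forestWeight n a {0} (F ⟨0, hk⟩) *
        ∏ i ∈ Finset.univ.filter (fun i : Fin k => i ≠ ⟨0, hk⟩),
          forestWeight n a (fullRootSet n k) (F i)) =
    ∑ F ∈ Finset.univ.filter (fun F : Fin k → Fin (n + 1) → Fin (n + 1) =>
        (∀ i : Fin k, IsRootedForest n (rootSetOf n k ((i : ℕ) + 1)) (F i)) ∧
        ¬ HasForbiddenMetaCycle n k hkn F),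
      ∏ i : Fin k, forestWeight n a (rootSetOf n k ((i : ℕ) + 1)) (F i) := by
  simp only [RootedForest.isRootedForest_iff_isForest, RootedForest.rootSetOf_eq_erase_node hkn,
    RootedForest.fullRootSet_eq_union_map_node hkn, RootedForest.forestWeight_eq_edgeWeight,
    RootedForest.hasForbiddenMetaCycle_iff_hasCycle]
  convert generalized_forest_identity_general a {0} (RootedForest.node hkn)
    (RootedForest.node_notMem_singleton_zero hkn) ⟨0, hk⟩
end

section
/- Involution Principle (chain form): Let S_0, S_1, ..., S_{m+1} be finite signed sets such that S_0 and S_{m+1} contain only positive elements. Suppose that for each 0 ≤ i ≤ m there is a sign-reversing involution φ_i on the difference S_i − S_{i+1}. Then there exists a bijection between S_0 and S_{m+1}. -/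
/-!
STATEMENT 3: The Involution Principle (chain form).

A signed set is modeled as a finite type `S i` together with a sign function
`sgn i : S i → Bool` (`true` = positive, `false` = negative); this encodes the
partition `S = S⁺ ⊔ S⁻`.  The difference `S_i − S_{i+1}` is the disjoint union
`S i ⊕ S (i+1)` with sign `Sum.elim (sgn i) (fun y => !(sgn (i+1) y))`, i.e.
`(S_i − S_{i+1})⁺ = S_i⁺ ⊔ S_{i+1}⁻` and `(S_i − S_{i+1})⁻ = S_i⁻ ⊔ S_{i+1}⁺`.
A sign-reversing involution on the difference is an involution sending positive
elements to negative ones and vice versa.  The chain is `S 0, S 1, ..., S (m+1)`,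
with the involution `φ i` acting on `S i − S (i+1)` for `0 ≤ i ≤ m`.
-/

/-!
The signed counts `|S⁺| - |S⁻|` agree along the chain: a sign-reversing injection on `S - T` gives
`|S⁺| + |T⁻| = |S⁻| + |T⁺|`, and adding two such identities cancels the finite middle set. At the
two ends the signed count is the cardinality.
-/

section SignedCard

open Cardinal

universe u

variable {α β γ : Type u}

/-- A function on the signed set `(α, sgn)` that sends positive elements to negative ones and
negative elements to positive ones. As in `involution_principle`, `true` stands for positive. -/
def IsSignReversing (sgn : α → Bool) (f : α → α) : Prop :=
  ∀ x, sgn (f x) = !sgn x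

/-- The sign function of the difference of two signed sets. -/
abbrev differenceSign (s : α → Bool) (t : β → Bool) : α ⊕ β → Bool :=
  Sum.elim s (fun y => !(t y))

/-- Equality of the signed counts `|S⁺| - |S⁻|` and `|T⁺| - |T⁻|`, with the negative terms moved
across because cardinals cannot be subtracted. It is transitive only through finite sets. -/
def SameSignedCard (s : α → Bool) (t : β → Bool) : Prop :=
  #{x // s x = true} + #{y // t y = false} = #{x // s x = false} + #{y // t y = true}

lemma IsSignReversing.mk_fiber_le {sgn : α → Bool} {f : α → α} (hrev : IsSignReversing sgn f)
    (hinj : Function.Injective f) (b : Bool) : #{x // sgn x = b} ≤ #{x // sgn x = !b} :=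
  mk_le_of_injective (Subtype.map_injective (fun x hx => by rw [hrev x, hx]) hinj)

lemma IsSignReversing.mk_positive_eq_mk_negative {sgn : α → Bool} {f : α → α}
    (hrev : IsSignReversing sgn f) (hinj : Function.Injective f) :
    #{x // sgn x = true} = #{x // sgn x = false} :=
  le_antisymm (hrev.mk_fiber_le hinj true) (hrev.mk_fiber_le hinj false)

lemma mk_fiber_differenceSign (s : α → Bool) (t : β → Bool) (b : Bool) :
    #{z // differenceSign s t z = b} = #{x // s x = b} + #{y // t y = !b} := by
  rw [mk_congr Equiv.subtypeSum, ← add_def]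
  simp only [Sum.elim_inl, Sum.elim_inr, Bool.not_eq_eq_eq_not]

lemma SameSignedCard.of_isSignReversing {s : α → Bool} {t : β → Bool} {f : α ⊕ β → α ⊕ β}
    (hrev : IsSignReversing (differenceSign s t) f) (hinj : Function.Injective f) :
    SameSignedCard s t := by
  have h := hrev.mk_positive_eq_mk_negative hinj
  rwa [mk_fiber_differenceSign, mk_fiber_differenceSign] at h

lemma SameSignedCard.trans [Finite β] {s : α → Bool} {t : β → Bool} {r : γ → Bool}
    (hst : SameSignedCard s t) (htr : SameSignedCard t r) : SameSignedCard s r := by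
  unfold SameSignedCard at *
  have hfinite : #{y // t y = false} + #{y // t y = true} < ℵ₀ :=
    add_lt_aleph0 (lt_aleph0_of_finite _) (lt_aleph0_of_finite _)
  rw [← add_right_inj_of_lt_aleph0 hfinite]
  calc
    _ = (#{x // s x = true} + #{y // t y = false}) +
          (#{y // t y = true} + #{z // r z = false}) := by ring
    _ = (#{x // s x = false} + #{y // t y = true}) +
          (#{y // t y = false} + #{z // r z = true}) := by rw [hst, htr]
    _ = _ := by ring

lemma SameSignedCard.nonempty_equiv {s : α → Bool} {t : β → Bool} (h : SameSignedCard s t)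
    (hs : ∀ x, s x = true) (ht : ∀ y, t y = true) : Nonempty (α ≃ β) := by
  have hpositive : #{x // s x = true} = #{y // t y = true} := by
    simpa [SameSignedCard, hs, ht] using h
  obtain ⟨e⟩ := Cardinal.eq.mp hpositive
  exact ⟨(Equiv.subtypeUnivEquiv hs).symm.trans (e.trans (Equiv.subtypeUnivEquiv ht))⟩

lemma sameSignedCard_zero_succ {m : ℕ} {S : Fin (m + 2) → Type u}
    [∀ i : Fin m, Finite (S i.castSucc.succ)] {sgn : ∀ i, S i → Bool}
    (hstep : ∀ i : Fin (m + 1), SameSignedCard (sgn i.castSucc) (sgn i.succ)) (i : Fin (m + 1)) :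
    SameSignedCard (sgn 0) (sgn i.succ) := by
  induction i using Fin.induction with
  | zero => exact hstep 0
  | succ i ih => exact ih.trans (hstep i.succ)

theorem involution_principle_general {m : ℕ} {S : Fin (m + 2) → Type u}
    [∀ i : Fin m, Finite (S i.castSucc.succ)] {sgn : ∀ i, S i → Bool}
    (h0 : ∀ x, sgn 0 x = true) (hlast : ∀ x, sgn (Fin.last (m + 1)) x = true)
    {φ : ∀ i : Fin (m + 1), S i.castSucc ⊕ S i.succ → S i.castSucc ⊕ S i.succ}
    (hinj : ∀ i, Function.Injective (φ i))
    (hrev : ∀ i, IsSignReversing (differenceSign (sgn i.castSucc) (sgn i.succ)) (φ i)) :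
    Nonempty (S 0 ≃ S (Fin.last (m + 1))) := by
  have hstep (i : Fin (m + 1)) : SameSignedCard (sgn i.castSucc) (sgn i.succ) :=
    .of_isSignReversing (hrev i) (hinj i)
  have hends : SameSignedCard (sgn 0) (sgn (Fin.last (m + 1))) :=
    sameSignedCard_zero_succ hstep (Fin.last m)
  exact hends.nonempty_equiv h0 hlast

end SignedCard

theorem involution_principle (m : ℕ) (S : Fin (m + 2) → Type*) [∀ i, Fintype (S i)]
    (sgn : ∀ i : Fin (m + 2), S i → Bool)
    (h0 : ∀ x : S 0, sgn 0 x = true)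
    (hlast : ∀ x : S (Fin.last (m + 1)), sgn (Fin.last (m + 1)) x = true)
    (φ : ∀ i : Fin (m + 1), S i.castSucc ⊕ S i.succ → S i.castSucc ⊕ S i.succ)
    (hinv : ∀ i : Fin (m + 1), Function.Involutive (φ i))
    (hrev : ∀ (i : Fin (m + 1)) (x : S i.castSucc ⊕ S i.succ),
      Sum.elim (sgn i.castSucc) (fun y => !(sgn i.succ y)) (φ i x) =
        !(Sum.elim (sgn i.castSucc) (fun y => !(sgn i.succ y)) x)) :
    Nonempty (S 0 ≃ S (Fin.last (m + 1))) :=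
  involution_principle_general h0 hlast (fun i => (hinv i).injective) hrev
end

section
/- Let 1 ≤ i ≤ k ≤ n and let j ∈ {0,1,...,k} with j ≠ i. Suppose F is a rooted forest on V = {0,1,...,n} with root set {0,...,k}∖{i}, and suppose that for every root r ∈ {0,...,k}∖{i}, the tree of F rooted at r contains exactly one element of the set {0,...,k}∖{j}. Then node i belongs to the tree rooted at j; that is, the root of node i in F is j. -/
/-- The tree rooted at `r` of the functional graph of `F`: the nodes whose forward orbit meets `r`.
When `r` is a root of a forest `F`, these are the nodes whose root is `r`. -/
def rootedTree {α : Type*} (F : α → α) (r : α) : Set α :=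
  {v | ∃ m : ℕ, F^[m] v = r}

theorem mem_rootedTree_self {α : Type*} (F : α → α) (r : α) : r ∈ rootedTree F r :=
  ⟨0, rfl⟩

theorem root_of_special_node_general {α : Type*} {F : α → α} {S : Set α} {i j : α}
    (hi : i ∈ S) (hroot : ∃ r ∈ S \ {i}, i ∈ rootedTree F r)
    (htree : ∀ r ∈ S \ {i}, (S \ {j} ∩ rootedTree F r).Subsingleton) :
    i ∈ rootedTree F j := by
  by_contra hij
  obtain ⟨r, hr, hir⟩ := hroot
  have i_ne_j : i ≠ j := fun h => hij (h ▸ mem_rootedTree_self F i)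
  have r_ne_j : r ≠ j := fun h => hij (h ▸ hir)
  have r_eq_i : r = i :=
    htree r hr ⟨⟨hr.1, r_ne_j⟩, mem_rootedTree_self F r⟩ ⟨⟨hi, i_ne_j⟩, hir⟩
  exact hr.2 r_eq_i

theorem IsRootedForest.exists_mem_rootedTree {n : ℕ} {U : Finset (Fin (n + 1))}
    {F : Fin (n + 1) → Fin (n + 1)} (hF : IsRootedForest n U F) (v : Fin (n + 1)) :
    ∃ r ∈ U, v ∈ rootedTree F r :=
  let ⟨m, hm⟩ := hF.2.2 v
  ⟨F^[m] v, hm, m, rfl⟩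

theorem mem_rootSetOf {n k a : ℕ} {v : Fin (n + 1)} :
    v ∈ rootSetOf n k a ↔ (v : ℕ) ≤ k ∧ (v : ℕ) ≠ a := by
  simp [rootSetOf]

theorem coe_rootSetOf {n k : ℕ} (a : Fin (n + 1)) :
    (rootSetOf n k a : Set (Fin (n + 1))) = {v : Fin (n + 1) | (v : ℕ) ≤ k} \ {a} := by
  ext v
  simp [mem_rootSetOf, Fin.ext_iff]

theorem root_of_special_node (n k i j : ℕ) (hk : 1 ≤ k) (hkn : k ≤ n)
    (hi1 : 1 ≤ i) (hik : i ≤ k) (hjk : j ≤ k) (hji : j ≠ i)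
    (F : Fin (n + 1) → Fin (n + 1))
    (hF : IsRootedForest n (rootSetOf n k i) F)
    (htree : ∀ r ∈ rootSetOf n k i,
      ∃! v : Fin (n + 1), ((v : ℕ) ≤ k ∧ (v : ℕ) ≠ j) ∧ ∃ m : ℕ, F^[m] v = r) :
    ∃ m : ℕ, F^[m] (⟨i, by omega⟩ : Fin (n + 1)) = (⟨j, by omega⟩ : Fin (n + 1)) := by
  refine root_of_special_node_general (F := F) (S := {v | (v : ℕ) ≤ k}) (j := ⟨j, by omega⟩)
    hik ?_ ?_ <;> simp only [← coe_rootSetOf]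
  exacts [hF.exists_mem_rootedTree _, fun r hr v hv w hw =>
    (htree r hr).unique (hv.imp_left mem_rootSetOf.1) (hw.imp_left mem_rootSetOf.1)]
end
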